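/- Let D be an integral domain and ⋆ a semistar operation on D. The following are equivalent: (1) D is ⋆-Noetherian and a Prüfer ⋆-multiplication domain; (2) the set { F^⋆̃ : F a nonzero fractional ideal of D } is a group under the multiplication F^⋆̃ × G^⋆̃ := (FG)^⋆̃ (with identity D^⋆̃); (3) every nonzero fractional ideal of D is quasi-⋆̃-invertible; (4) every nonzero integral ideal of D is quasi-⋆̃-invertible. -/

import Mathlib

open scoped Pointwise

section SemistarDefs

variable {D : Type*} [CommRing D] [IsDomain D]
variable {K : Type*} [Field K] [Algebra D K] [IsFractionRing D K]

/-- `star` is a semistar operation on the integral domain `D` with quotient field `K`: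
a map on (nonzero) `D`-submodules of `K` satisfying `(xE)^⋆ = x·E^⋆`, monotonicity,
extensivity and idempotence. -/
structure IsSemistarOperation (star : Submodule D K → Submodule D K) : Prop where
  ne_bot : ∀ {E : Submodule D K}, E ≠ ⊥ → star E ≠ ⊥
  map_smul : ∀ (x : K), x ≠ 0 → ∀ {E : Submodule D K}, E ≠ ⊥ →
    star (Submodule.map (LinearMap.mulLeft D x) E) = Submodule.map (LinearMap.mulLeft D x) (star E)
  mono : ∀ {E F : Submodule D K}, E ≠ ⊥ → F ≠ ⊥ → E ≤ F → star E ≤ star F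
  le_star : ∀ {E : Submodule D K}, E ≠ ⊥ → E ≤ star E
  star_star : ∀ {E : Submodule D K}, E ≠ ⊥ → star (star E) = star E

/-- The image in `K` of an ideal `I` of `D`, as a `D`-submodule of `K`. -/
def idealExt (K : Type*) [Field K] [Algebra D K] (I : Ideal D) : Submodule D K :=
  Submodule.map (Algebra.linearMap D K) I

/-- `I` is a quasi-⋆-ideal: a nonzero ideal of `D` with `I = I^⋆ ∩ D`. -/
def QuasiStarIdeal (star : Submodule D K → Submodule D K) (I : Ideal D) : Prop :=
  I ≠ ⊥ ∧ Submodule.comap (Algebra.linearMap D K) (star (idealExt K I)) = I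

/-- `P` is a quasi-⋆-prime: a prime ideal which is a quasi-⋆-ideal. -/
def QuasiStarPrime (star : Submodule D K → Submodule D K) (P : Ideal D) : Prop :=
  P.IsPrime ∧ QuasiStarIdeal star P

/-- `M` is a quasi-⋆-maximal ideal: maximal in the set of proper quasi-⋆-ideals of `D`. -/
def QuasiStarMaximal (star : Submodule D K → Submodule D K) (M : Ideal D) : Prop :=
  QuasiStarIdeal star M ∧ M ≠ ⊤ ∧
    ∀ J : Ideal D, QuasiStarIdeal star J → J ≠ ⊤ → M ≤ J → J = M

/-- The finite-type semistar operation `⋆_f` associated to `⋆`: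
`E^{⋆_f} = ⋃ { F^⋆ : F nonzero finitely generated, F ⊆ E }`. -/
def finTypeOp (star : Submodule D K → Submodule D K) : Submodule D K → Submodule D K :=
  fun E => ⨆ (F : Submodule D K) (_ : F ≠ ⊥) (_ : F.FG) (_ : F ≤ E), star F

/-- The extension `E·D_Q` of a `D`-submodule `E` of `K` to the localization of `D` at
(the complement of) `Q`, described as `{ x ∈ K : s·x ∈ E for some s ∉ Q }`. -/
def extendToPrime (Q : Ideal D) (E : Submodule D K) : Submodule D K :=
  Submodule.span D {x : K | ∃ s : D, s ∉ Q ∧ algebraMap D K s * x ∈ E}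

/-- The stable semistar operation of finite type `⋆̃` associated to `⋆`:
`E^⋆̃ = ⋂ { E·D_Q : Q a quasi-⋆_f-maximal ideal of D }`. -/
def stableOp (star : Submodule D K → Submodule D K) : Submodule D K → Submodule D K :=
  fun E => ⨅ (Q : Ideal D) (_ : QuasiStarMaximal (finTypeOp star) Q), extendToPrime Q E

/-- A rank-one discrete valuation ring: a (domain which is a) local PID which is not a field. -/
def IsDVR (R : Type*) [CommRing R] : Prop :=
  ∃ h : IsDomain R, @IsDiscreteValuationRing R _ h

/-- A valuation domain. -/
def IsValuationDomain (R : Type*) [CommRing R] : Prop :=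
  ∃ h : IsDomain R, @ValuationRing R _ h

/-- `D` is a ⋆-almost Dedekind domain: `D_M` is a rank-one discrete valuation ring for
every quasi-⋆_f-maximal ideal `M` of `D`. -/
def StarADD (star : Submodule D K → Submodule D K) : Prop :=
  ∀ (M : Ideal D) [M.IsPrime], QuasiStarMaximal (finTypeOp star) M →
    IsDVR (Localization.AtPrime M)

/-- `D` is a Prüfer ⋆-multiplication domain: `D_M` is a valuation domain for every
quasi-⋆_f-maximal ideal `M` of `D`. -/
def StarPMD (star : Submodule D K → Submodule D K) : Prop :=
  ∀ (M : Ideal D) [M.IsPrime], QuasiStarMaximal (finTypeOp star) M →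
    IsValuationDomain (Localization.AtPrime M)

/-- `D` is ⋆-Noetherian: ascending chain condition on quasi-⋆-ideals. -/
def StarNoetherian (star : Submodule D K → Submodule D K) : Prop :=
  ∀ c : ℕ →o Ideal D, (∀ n, QuasiStarIdeal star (c n)) → ∃ n, ∀ m, n ≤ m → c m = c n

/-- `D` is a ⋆-Dedekind domain: ⋆-Noetherian and a P⋆MD. -/
def StarDedekind (star : Submodule D K → Submodule D K) : Prop :=
  StarNoetherian star ∧ StarPMD star

/-- `D` has the ⋆_f-finite character property: every nonzero element of `D` lies in only
finitely many quasi-⋆_f-maximal ideals. -/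
def StarFiniteCharacter (star : Submodule D K → Submodule D K) : Prop :=
  ∀ d : D, d ≠ 0 → {M : Ideal D | QuasiStarMaximal (finTypeOp star) M ∧ d ∈ M}.Finite

/-- The `v`-operation `E ↦ (D : (D : E))`. -/
def vOp : Submodule D K → Submodule D K := fun E => 1 / (1 / E)

/-- A nonzero `D`-submodule `E` of `K` is quasi-∗-invertible if `(E·(D^∗ : E))^∗ = D^∗`. -/
def QuasiStarInvertible (star : Submodule D K → Submodule D K) (E : Submodule D K) : Prop :=
  star (E * (star 1 / E)) = star (1 : Submodule D K)

/-- `D` has the ∗-cancellation law: for nonzero fractional ideals `A`, `B`, `C`,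
`(AB)^∗ = (AC)^∗` implies `B^∗ = C^∗`. -/
def StarCancellation (star : Submodule D K → Submodule D K) : Prop :=
  ∀ A B C : Submodule D K, A ≠ ⊥ → B ≠ ⊥ → C ≠ ⊥ →
    IsFractional (nonZeroDivisors D) A → IsFractional (nonZeroDivisors D) B →
    IsFractional (nonZeroDivisors D) C →
    star (A * B) = star (A * C) → star B = star C

/-- The ∗-dimension of `D`: the supremum of the lengths of chains of quasi-∗-prime ideals
of `D` (between `(0)` and a quasi-∗-prime). -/
noncomputable def starDim (star : Submodule D K → Submodule D K) : ℕ∞ :=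
  ⨆ (k : ℕ) (_ : ∃ c : Fin k → Ideal D, StrictMono c ∧ ∀ i, QuasiStarPrime star (c i)),
    (k : ℕ∞)

/-- A submodule `T` of `K` (containing the image of an integral domain with quotient
field `K`) is integrally closed (in `K`) if every `x ∈ K` satisfying a monic polynomial
equation with coefficients in `T` belongs to `T`. -/
def IntegrallyClosedSub (T : Submodule D K) : Prop :=
  ∀ x : K, (∃ (n : ℕ) (c : Fin n → K), (∀ i, c i ∈ T) ∧
    x ^ n = ∑ i : Fin n, c i * x ^ (i : ℕ)) → x ∈ T

/-- The content ideal `c(p)` of a polynomial: the ideal generated by its coefficients. -/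
def contentIdeal (p : Polynomial D) : Ideal D := Ideal.span (Set.range p.coeff)

/-- The multiplicative set `N(⋆) = { h ∈ D[X] : h ≠ 0, c(h)^⋆ = D^⋆ }` (as a submonoid,
via the closure of this multiplicatively closed set). -/
noncomputable def nagataMonoid (star : Submodule D K → Submodule D K) : Submonoid (Polynomial D) :=
  Submonoid.closure
    {p : Polynomial D | p ≠ 0 ∧ star (idealExt K (contentIdeal p)) = star (1 : Submodule D K)}

/-- The Nagata ring `Na(D,⋆) = D[X]_{N(⋆)}`. -/
abbrev NagataRing (star : Submodule D K → Submodule D K) :=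
  Localization (nagataMonoid star)

/-- `V` is a valuation overring of `D` (inside the quotient field `K`): `D ⊆ V ⊆ K` and
for every nonzero `x ∈ K`, `x ∈ V` or `x⁻¹ ∈ V`. -/
def IsValuationOverring (D : Type*) [CommRing D] {K : Type*} [Field K] [Algebra D K]
    (V : Subring K) : Prop :=
  (∀ d : D, algebraMap D K d ∈ V) ∧ ∀ x : K, x ≠ 0 → (x ∈ V ∨ x⁻¹ ∈ V)

/-- `V` is a ∗-valuation overring of `D`: a valuation overring such that `F^∗ ⊆ FV` for
every nonzero finitely generated `D`-submodule `F` of `K`. -/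
def IsStarValuationOverring (star : Submodule D K → Submodule D K) (V : Subring K) : Prop :=
  IsValuationOverring D V ∧
    ∀ F : Submodule D K, F ≠ ⊥ → F.FG →
      star F ≤ Submodule.span D ((F : Set K) * (V : Set K))

/-- `D` is a Krull domain: there is a family of rank-one discrete valuation overrings of `D`
with quotient field `K` whose intersection is `D`, with finite character. -/
def IsKrullDomain (D : Type*) [CommRing D] (K : Type*) [Field K] [Algebra D K] : Prop :=
  ∃ 𝒱 : Set (Subring K),
    (∀ V ∈ 𝒱, (∀ d : D, algebraMap D K d ∈ V) ∧ IsDVR V ∧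
      ∀ x : K, ∃ a ∈ V, ∃ b ∈ V, b ≠ 0 ∧ x * b = a) ∧
    (⋂ V ∈ 𝒱, (V : Set K)) = Set.range (algebraMap D K) ∧
    ∀ d : D, d ≠ 0 → {V ∈ 𝒱 | ¬ ∃ y ∈ V, algebraMap D K d * y = 1}.Finite

end SemistarDefs

/-!
All four conditions are compared through quasi-⋆̃-invertibility, which is local: `E` is
quasi-⋆̃-invertible if and only if `1 ∈ E(D^⋆̃ : E)·D_Q` for every quasi-⋆_f-maximal `Q`.
Applied to the submodules generated by `1` and `x`, this forces each `D_Q` to be a valuation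
domain; conversely, over a valuation domain a finitely generated `E` becomes principal. So `D` is a
P⋆MD exactly when every nonzero finitely generated `E` is quasi-⋆̃-invertible. Likewise `D` is
⋆-Noetherian exactly when every nonzero ideal `I` contains, after extension to `K`, a nonzero
finitely generated `F` with `I ⊆ F^⋆`.

In a P⋆MD the operations `⋆_f` and `⋆̃` agree: first on `D`, by the valuation property, and then on
every invertible `E`, since `E^{⋆_f} ⊆ (E·E^{⋆_f}·(D^⋆̃ : E))^⋆̃ ⊆ (E·D^⋆̃)^⋆̃ = E^⋆̃`. Hence,
if `D` is also ⋆-Noetherian, `I^⋆̃ = F^⋆̃` and `I` inherits invertibility from `F`.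
Conversely, when `I` is invertible, `1 ∈ (I(D^⋆̃ : I))^⋆̃` is witnessed by finitely many elements
of `I`, and these generate a suitable `F`.
-/

section Submodules

theorem exists_le_of_fg_of_le_iSup_of_directed {R M ι : Type*} [Semiring R] [AddCommMonoid M]
    [Module R M] [Nonempty ι] {X : ι → Submodule R M} (hX : Directed (· ≤ ·) X)
    {F : Submodule R M} (hF : F.FG) (h : F ≤ ⨆ i, X i) : ∃ i, F ≤ X i := by
  obtain ⟨_, ⟨i, rfl⟩, hFi⟩ := (Submodule.fg_iff_compact F).1 hF (Set.range X) _
    (Set.range_nonempty X) hX.directedOn_range isLUB_iSup h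
  exact ⟨i, hFi⟩

theorem exists_fg_le_mul_of_fg_of_le_mul {R A : Type*} [CommSemiring R] [Semiring A] [Algebra R A]
    {G E Z : Submodule R A} (hG : G.FG) (hGEZ : G ≤ E * Z) :
    ∃ F ≤ E, F.FG ∧ G ≤ F * Z := by
  induction G, hG using Submodule.fg_induction with
  | singleton x =>
    rw [Submodule.span_singleton_le_iff_mem] at hGEZ
    obtain ⟨S, T, hS, hT, hx⟩ := Submodule.mem_span_mul_finite_of_mem_mul hGEZ
    refine ⟨.span R S, Submodule.span_le.2 hS, Submodule.fg_span S.finite_toSet, ?_⟩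
    rw [Submodule.span_singleton_le_iff_mem]
    rw [← Submodule.span_mul_span] at hx
    exact mul_le_mul' le_rfl (Submodule.span_le.2 hT) hx
  | sup G₁ G₂ _ _ ih₁ ih₂ =>
    obtain ⟨F₁, hF₁E, hF₁, hGF₁⟩ := ih₁ (le_sup_left.trans hGEZ)
    obtain ⟨F₂, hF₂E, hF₂, hGF₂⟩ := ih₂ (le_sup_right.trans hGEZ)
    refine ⟨F₁ ⊔ F₂, sup_le hF₁E hF₂E, hF₁.sup hF₂, ?_⟩
    rw [Submodule.sup_mul]
    exact sup_le_sup hGF₁ hGF₂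

theorem submodule_mul_div_le {R A : Type*} [CommSemiring R] [CommSemiring A] [Algebra R A]
    (E F : Submodule R A) : E * (F / E) ≤ F := by
  rw [mul_comm, ← Submodule.le_div_iff_mul_le]

end Submodules

section Semistar

variable {D : Type*} [CommRing D] {K : Type*} [Field K] [Algebra D K]
variable {star : Submodule D K → Submodule D K} {E F : Submodule D K}

theorem map_mulLeft_ne_bot {x : K} (hx : x ≠ 0) (hE : E ≠ ⊥) :
    E.map (LinearMap.mulLeft D x) ≠ ⊥ := by
  have hinj := Submodule.map_injective_of_injective (f := LinearMap.mulLeft D x)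
    (mul_right_injective₀ hx)
  rwa [← Submodule.map_bot (LinearMap.mulLeft D x), hinj.ne_iff]

namespace IsSemistarOperation

theorem mul_mem (h : IsSemistarOperation star) (hE : E ≠ ⊥) {x y : K}
    (hxE : ∀ e ∈ E, x * e ∈ F) (hy : y ∈ star E) : x * y ∈ star F := by
  rcases eq_or_ne x 0 with rfl | hx
  · simp
  have hle : E.map (LinearMap.mulLeft D x) ≤ F := Submodule.map_le_iff_le_comap.2 hxE
  have hxE₀ := map_mulLeft_ne_bot hx hE
  have hmono := h.mono hxE₀ (ne_bot_of_le_ne_bot hxE₀ hle) hle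
  rw [h.map_smul x hx hE] at hmono
  exact hmono (Submodule.mem_map_of_mem hy)

theorem of_mul_mem (le_star : ∀ {E : Submodule D K}, E ≠ ⊥ → E ≤ star E)
    (star_star_le : ∀ {E : Submodule D K}, E ≠ ⊥ → star (star E) ≤ star E)
    (mul_mem : ∀ {E F : Submodule D K} {x y : K}, E ≠ ⊥ → (∀ e ∈ E, x * e ∈ F) →
      y ∈ star E → x * y ∈ star F) :
    IsSemistarOperation star where
  ne_bot hE := ne_bot_of_le_ne_bot hE (le_star hE)
  map_smul x hx E hE := by
    refine le_antisymm (fun z hz => ⟨x⁻¹ * z, ?_, mul_inv_cancel_left₀ hx z⟩) ?_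
    · rintro _ ⟨y, hy, rfl⟩
      exact mul_mem hE (fun e he => Submodule.mem_map_of_mem he) hy
    · refine mul_mem (map_mulLeft_ne_bot hx hE) ?_ hz
      rintro _ ⟨e, he, rfl⟩
      rwa [LinearMap.mulLeft_apply, inv_mul_cancel_left₀ hx]
  mono hE _ hEF y hy := by
    simpa using mul_mem (x := 1) hE (fun e he => by simpa using hEF he) hy
  le_star := le_star
  star_star hE := (star_star_le hE).antisymm (le_star (ne_bot_of_le_ne_bot hE (le_star hE)))

theorem star_le_star (h : IsSemistarOperation star) (hE : E ≠ ⊥) (hEF : E ≤ F) :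
    star E ≤ star F :=
  h.mono hE (ne_bot_of_le_ne_bot hE hEF) hEF

theorem star_le_star_of_le_star (h : IsSemistarOperation star) (hE : E ≠ ⊥) (hF : F ≠ ⊥)
    (hEF : E ≤ star F) : star E ≤ star F :=
  (h.star_le_star hE hEF).trans_eq (h.star_star hF)

end IsSemistarOperation

theorem exists_fg_le_mem {x : K} (hE : E ≠ ⊥) (hx : x ∈ E) :
    ∃ F : Submodule D K, F ≠ ⊥ ∧ F.FG ∧ F ≤ E ∧ x ∈ F := by
  obtain ⟨e, he, he₀⟩ := E.ne_bot_iff.1 hE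
  refine ⟨.span D {x, e}, ?_, Submodule.fg_span (by simp), ?_, Submodule.subset_span (by simp)⟩
  · exact (Submodule.ne_bot_iff _).2 ⟨e, Submodule.subset_span (by simp), he₀⟩
  · simp [Submodule.span_le, Set.pair_subset_iff, hx, he]

theorem nonempty_fg_le (hE : E ≠ ⊥) :
    Nonempty {F : Submodule D K // F ≠ ⊥ ∧ F.FG ∧ F ≤ E} :=
  let ⟨F, hF₀, hF, hFE, _⟩ := exists_fg_le_mem hE E.zero_mem
  ⟨⟨F, hF₀, hF, hFE⟩⟩

theorem finTypeOp_eq_iSup :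
    finTypeOp star E = ⨆ F : {F : Submodule D K // F ≠ ⊥ ∧ F.FG ∧ F ≤ E}, star F := by
  simp only [finTypeOp, iSup_subtype, iSup_and]

theorem star_le_finTypeOp_of_fg (hE : E ≠ ⊥) (hfg : E.FG) : star E ≤ finTypeOp star E :=
  finTypeOp_eq_iSup (star := star) ▸
    le_iSup (fun F : {F : Submodule D K // F ≠ ⊥ ∧ F.FG ∧ F ≤ E} => star F) ⟨E, hE, hfg, le_rfl⟩

namespace IsSemistarOperation

theorem directed_star_fg_le (h : IsSemistarOperation star) (E : Submodule D K) :
    Directed (· ≤ ·) fun F : {F : Submodule D K // F ≠ ⊥ ∧ F.FG ∧ F ≤ E} => star F := by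
  rintro ⟨F, hF₀, hF, hFE⟩ ⟨G, hG₀, hG, hGE⟩
  exact ⟨⟨F ⊔ G, ne_bot_of_le_ne_bot hF₀ le_sup_left, hF.sup hG, sup_le hFE hGE⟩,
    h.star_le_star hF₀ le_sup_left, h.star_le_star hG₀ le_sup_right⟩

theorem mem_finTypeOp (h : IsSemistarOperation star) (hE : E ≠ ⊥) {x : K} :
    x ∈ finTypeOp star E ↔ ∃ F : Submodule D K, (F ≠ ⊥ ∧ F.FG ∧ F ≤ E) ∧ x ∈ star F := by
  have := nonempty_fg_le hE
  rw [finTypeOp_eq_iSup, Submodule.mem_iSup_of_directed _ (h.directed_star_fg_le E),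
    Subtype.exists]
  simp only [exists_prop]

theorem finTypeOp_le (h : IsSemistarOperation star) (hE : E ≠ ⊥) : finTypeOp star E ≤ star E := by
  intro x hx
  obtain ⟨F, ⟨hF₀, -, hFE⟩, hxF⟩ := (h.mem_finTypeOp hE).1 hx
  exact h.star_le_star hF₀ hFE hxF

theorem isSemistarOperation_finTypeOp (h : IsSemistarOperation star) :
    IsSemistarOperation (finTypeOp star) := by
  have le_star {E : Submodule D K} (hE : E ≠ ⊥) : E ≤ finTypeOp star E := fun x hx =>
    let ⟨F, hF₀, hF, hFE, hxF⟩ := exists_fg_le_mem hE hx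
    (h.mem_finTypeOp hE).2 ⟨F, ⟨hF₀, hF, hFE⟩, h.le_star hF₀ hxF⟩
  refine .of_mul_mem le_star (fun {E} hE x hx => ?_) (fun {E F x y} hE hxE hy => ?_)
  · obtain ⟨F, ⟨hF₀, hF, hFE⟩, hxF⟩ :=
      (h.mem_finTypeOp (ne_bot_of_le_ne_bot hE (le_star hE))).1 hx
    have := nonempty_fg_le hE
    rw [finTypeOp_eq_iSup] at hFE
    obtain ⟨⟨G, hG₀, hG, hGE⟩, hFG⟩ :=
      exists_le_of_fg_of_le_iSup_of_directed (h.directed_star_fg_le E) hF hFE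
    exact (h.mem_finTypeOp hE).2
      ⟨G, ⟨hG₀, hG, hGE⟩, h.star_le_star_of_le_star hF₀ hG₀ hFG hxF⟩
  · rcases eq_or_ne x 0 with rfl | hx
    · simp
    obtain ⟨G, ⟨hG₀, hG, hGE⟩, hyG⟩ := (h.mem_finTypeOp hE).1 hy
    have hxG : G.map (LinearMap.mulLeft D x) ≤ F :=
      Submodule.map_le_iff_le_comap.2 fun e he => hxE e (hGE he)
    have hxG₀ := map_mulLeft_ne_bot hx hG₀
    exact (h.mem_finTypeOp (ne_bot_of_le_ne_bot hxG₀ hxG)).2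
      ⟨_, ⟨hxG₀, hG.map _, hxG⟩, h.mul_mem hG₀ (fun e he => Submodule.mem_map_of_mem he) hyG⟩

end IsSemistarOperation

end Semistar

section QuasiStarIdeals

variable {D : Type*} [CommRing D] {K : Type*} [Field K] [Algebra D K]
variable {star : Submodule D K → Submodule D K} {I J : Ideal D}

theorem idealExt_mono (hIJ : I ≤ J) : idealExt K I ≤ idealExt K J :=
  Submodule.map_mono hIJ

theorem idealExt_le_one : idealExt K I ≤ 1 :=
  Submodule.one_eq_range (R := D) (A := K) ▸ LinearMap.map_le_range

theorem isFractional_idealExt (I : Ideal D) : IsFractional (nonZeroDivisors D) (idealExt K I) :=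
  FractionalIdeal.isFractional_of_le_one _ idealExt_le_one

theorem idealExt_comap {E : Submodule D K} (hE : E ≤ 1) :
    idealExt K (E.comap (Algebra.linearMap D K)) = E :=
  Submodule.map_comap_eq_of_le (Submodule.one_eq_range (R := D) (A := K) ▸ hE)

/-- The quasi-⋆-closure `I^⋆ ∩ D` of an ideal `I` of `D`. -/
def quasiClosure (star : Submodule D K → Submodule D K) (I : Ideal D) : Ideal D :=
  (star (idealExt K I)).comap (Algebra.linearMap D K)

theorem quasiClosure_mono (h : IsSemistarOperation star) (hI : idealExt K I ≠ ⊥) (hIJ : I ≤ J) :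
    quasiClosure star I ≤ quasiClosure star J :=
  Submodule.comap_mono (h.star_le_star hI (idealExt_mono hIJ))

theorem StarNoetherian.wellFoundedGT (hN : StarNoetherian star) :
    WellFoundedGT {J : Ideal D // QuasiStarIdeal star J} :=
  wellFoundedGT_iff_monotone_chain_condition.2 fun c =>
    let ⟨n, hn⟩ := hN ⟨fun n => c n, fun _ _ hmn => c.monotone hmn⟩ fun n => (c n).2
    ⟨n, fun m hm => Subtype.ext (hn m hm).symm⟩

theorem starNoetherian_of_forall_exists_fg_le (h : IsSemistarOperation star)
    (hfg : ∀ I : Ideal D, I ≠ ⊥ →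
      ∃ F ≤ idealExt K I, F ≠ ⊥ ∧ F.FG ∧ idealExt K I ≤ star F) :
    StarNoetherian star := by
  intro c hc
  obtain ⟨F, hFc, hF₀, hF, hle⟩ := hfg (⨆ n, c n) (ne_bot_of_le_ne_bot (hc 0).1 (le_iSup c 0))
  have hmono : Monotone fun n => idealExt K (c n) := fun _ _ hmn => idealExt_mono (c.monotone hmn)
  rw [idealExt, Submodule.map_iSup] at hFc
  obtain ⟨n, hFn⟩ := exists_le_of_fg_of_le_iSup_of_directed hmono.directed_le hF hFc
  refine ⟨n, fun m hm => le_antisymm ?_ (c.monotone hm)⟩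
  calc c m ≤ (star F).comap (Algebra.linearMap D K) :=
        (le_iSup c m).trans (Submodule.map_le_iff_le_comap.1 hle)
    _ ≤ quasiClosure star (c n) := Submodule.comap_mono (h.star_le_star hF₀ hFn)
    _ = c n := (hc n).2

variable [FaithfulSMul D K]

theorem algebraMap_mem_idealExt {x : D} : algebraMap D K x ∈ idealExt K I ↔ x ∈ I :=
  (FaithfulSMul.algebraMap_injective D K).mem_set_image

theorem idealExt_ne_bot (hI : I ≠ ⊥) : idealExt K I ≠ ⊥ := by
  have hinj := Submodule.map_injective_of_injective (f := Algebra.linearMap D K)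
    (FaithfulSMul.algebraMap_injective D K)
  rwa [idealExt, ← Submodule.map_bot (Algebra.linearMap D K), hinj.ne_iff]

theorem le_quasiClosure (h : IsSemistarOperation star) (hI : I ≠ ⊥) : I ≤ quasiClosure star I :=
  Submodule.map_le_iff_le_comap.1 (h.le_star (idealExt_ne_bot hI))

theorem quasiStarIdeal_quasiClosure (h : IsSemistarOperation star) (hI : I ≠ ⊥) :
    QuasiStarIdeal star (quasiClosure star I) := by
  have hcl := ne_bot_of_le_ne_bot hI (le_quasiClosure h hI)
  exact ⟨hcl, (Submodule.comap_mono (h.star_le_star_of_le_star (idealExt_ne_bot hcl)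
    (idealExt_ne_bot hI) (Submodule.map_comap_le _ _))).antisymm (le_quasiClosure h hcl)⟩

theorem QuasiStarMaximal.isPrime (h : IsSemistarOperation star) {Q : Ideal D}
    (hQ : QuasiStarMaximal star Q) : Q.IsPrime := by
  obtain ⟨⟨hQ₀, hQcl⟩, hQtop, hmax⟩ := hQ
  refine ⟨hQtop, fun {x y} hxy => or_iff_not_imp_left.2 fun hx => ?_⟩
  set J := Q ⊔ Ideal.span {x}
  have hJ₀ : J ≠ ⊥ := ne_bot_of_le_ne_bot hQ₀ le_sup_left
  have hJ : J ≤ quasiClosure star J := le_quasiClosure h hJ₀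
  have htop : quasiClosure star J = ⊤ := by
    by_contra hne
    have heq := hmax _ (quasiStarIdeal_quasiClosure h hJ₀) hne (le_sup_left.trans hJ)
    exact hx (heq ▸ hJ (Ideal.mem_sup_right (Ideal.mem_span_singleton_self x)))
  have hone : algebraMap D K 1 ∈ star (idealExt K J) :=
    show (1 : D) ∈ quasiClosure star J from htop ▸ Submodule.mem_top
  have hyJ : J ≤ Submodule.comap (LinearMap.mulLeft D y) Q :=
    sup_le (fun q hq => Q.mul_mem_left y hq)
      ((Ideal.span_singleton_le_iff_mem _).2 (by simpa [mul_comm] using hxy))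
  have hy := h.mul_mem (F := idealExt K Q) (x := algebraMap D K y) (idealExt_ne_bot hJ₀) (by
    rintro _ ⟨j, hj, rfl⟩
    simpa [← map_mul, algebraMap_mem_idealExt] using hyJ hj) hone
  rw [← hQcl]
  simpa using hy

theorem quasiStarIdeal_finTypeOp_sSup (h : IsSemistarOperation star) {c : Set (Ideal D)}
    (hne : c.Nonempty) (hc : IsChain (· ≤ ·) c) (hcq : ∀ I ∈ c, QuasiStarIdeal (finTypeOp star) I) :
    QuasiStarIdeal (finTypeOp star) (sSup c) := by
  obtain ⟨I, hI⟩ := hne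
  have hsup : sSup c ≠ ⊥ := ne_bot_of_le_ne_bot (hcq I hI).1 (le_sSup hI)
  refine ⟨hsup, le_antisymm (fun x hx => ?_) (le_quasiClosure h.isSemistarOperation_finTypeOp hsup)⟩
  obtain ⟨F, ⟨hF₀, hF, hFc⟩, hxF⟩ := (h.mem_finTypeOp (idealExt_ne_bot hsup)).1 hx
  rw [idealExt, sSup_eq_iSup', Submodule.map_iSup] at hFc
  have : Nonempty c := ⟨⟨I, hI⟩⟩
  have hdir : Directed (· ≤ ·) fun J : c => idealExt K J.1 :=
    hc.directedOn.directed_val.mono_comp _ fun _ _ => idealExt_mono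
  obtain ⟨⟨J, hJ⟩, hFJ⟩ := exists_le_of_fg_of_le_iSup_of_directed hdir hF hFc
  have hxJ : x ∈ quasiClosure (finTypeOp star) J :=
    (h.mem_finTypeOp (idealExt_ne_bot (hcq J hJ).1)).2 ⟨F, ⟨hF₀, hF, hFJ⟩, hxF⟩
  exact le_sSup hJ ((hcq J hJ).2.le hxJ)

theorem exists_le_quasiStarMaximal_finTypeOp (h : IsSemistarOperation star)
    (hI : QuasiStarIdeal (finTypeOp star) I) (hItop : I ≠ ⊤) :
    ∃ Q, QuasiStarMaximal (finTypeOp star) Q ∧ I ≤ Q := by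
  obtain ⟨Q, hIQ, hQ⟩ := zorn_le_nonempty₀
    {J : Ideal D | QuasiStarIdeal (finTypeOp star) J ∧ J ≠ ⊤} (fun c hcs hc J hJ => by
      refine ⟨sSup c, ⟨quasiStarIdeal_finTypeOp_sSup h ⟨J, hJ⟩ hc fun I hI => (hcs hI).1, ?_⟩,
        fun _ => le_sSup⟩
      rw [Ideal.ne_top_iff_one, Submodule.mem_sSup_of_directed ⟨J, hJ⟩ hc.directedOn]
      rintro ⟨I, hI, hone⟩
      exact (hcs hI).2 ((Ideal.eq_top_iff_one I).2 hone)) I ⟨hI, hItop⟩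
  exact ⟨Q, ⟨hQ.prop.1, hQ.prop.2, fun J hJ hJtop hQJ => (hQ.eq_of_le ⟨hJ, hJtop⟩ hQJ).symm⟩, hIQ⟩

theorem one_mem_finTypeOp_idealExt (h : IsSemistarOperation star) (hI : I ≠ ⊥)
    (hIQ : ∀ Q, QuasiStarMaximal (finTypeOp star) Q → ¬ I ≤ Q) :
    1 ∈ finTypeOp star (idealExt K I) := by
  have hfin := h.isSemistarOperation_finTypeOp
  have htop : quasiClosure (finTypeOp star) I = ⊤ := by
    by_contra hne
    obtain ⟨Q, hQ, hle⟩ :=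
      exists_le_quasiStarMaximal_finTypeOp h (quasiStarIdeal_quasiClosure hfin hI) hne
    exact hIQ Q hQ ((le_quasiClosure hfin hI).trans hle)
  have hone : (1 : D) ∈ quasiClosure (finTypeOp star) I := htop ▸ Submodule.mem_top
  simpa [quasiClosure] using hone

theorem StarNoetherian.exists_fg_le (h : IsSemistarOperation star) (hN : StarNoetherian star)
    (hI : I ≠ ⊥) : ∃ J ≤ I, J ≠ ⊥ ∧ J.FG ∧ idealExt K I ≤ star (idealExt K J) := by
  have := hN.wellFoundedGT
  let cl (J : {J : Ideal D // J ≤ I ∧ J ≠ ⊥ ∧ J.FG}) : {J : Ideal D // QuasiStarIdeal star J} :=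
    ⟨quasiClosure star J, quasiStarIdeal_quasiClosure h J.2.2.1⟩
  obtain ⟨a, ha, ha₀⟩ := I.ne_bot_iff.1 hI
  have hne : (Set.range cl).Nonempty :=
    ⟨_, ⟨Ideal.span {a}, (Ideal.span_singleton_le_iff_mem I).2 ha, by simpa using ha₀,
      Submodule.fg_span_singleton a⟩, rfl⟩
  obtain ⟨_, ⟨⟨J, hJI, hJ₀, hJ⟩, rfl⟩, hmax⟩ := wellFounded_gt.has_min (Set.range cl) hne
  refine ⟨J, hJI, hJ₀, hJ, Submodule.map_le_iff_le_comap.2 fun x hx => ?_⟩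
  have hJ'₀ : J ⊔ Ideal.span {x} ≠ ⊥ := ne_bot_of_le_ne_bot hJ₀ le_sup_left
  have hJ' : J ⊔ Ideal.span {x} ≤ I := sup_le hJI ((Ideal.span_singleton_le_iff_mem I).2 hx)
  have hnlt := hmax _ ⟨⟨_, hJ', hJ'₀, Submodule.FG.sup hJ (Submodule.fg_span_singleton x)⟩, rfl⟩
  have hle := quasiClosure_mono h (idealExt_ne_bot hJ₀) (le_sup_left : J ≤ J ⊔ Ideal.span {x})
  exact (hle.eq_of_not_lt hnlt).ge (le_quasiClosure h hJ'₀
    (Ideal.mem_sup_right (Ideal.mem_span_singleton_self x)))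

theorem starNoetherian_iff_forall_exists_fg_le (h : IsSemistarOperation star) :
    StarNoetherian star ↔ ∀ I : Ideal D, I ≠ ⊥ →
      ∃ F ≤ idealExt K I, F ≠ ⊥ ∧ F.FG ∧ idealExt K I ≤ star F := by
  refine ⟨fun hN I hI => ?_, starNoetherian_of_forall_exists_fg_le h⟩
  obtain ⟨J, hJI, hJ₀, hJ, hle⟩ := hN.exists_fg_le h hI
  exact ⟨idealExt K J, idealExt_mono hJI, idealExt_ne_bot hJ₀, Submodule.FG.map _ hJ, hle⟩

end QuasiStarIdeals

section ExtendToPrime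

variable {D : Type*} [CommRing D] {K : Type*} [Field K] [Algebra D K]
variable {Q : Ideal D} {E F : Submodule D K}

theorem extendToPrime_mono (hEF : E ≤ F) : extendToPrime Q E ≤ extendToPrime Q F :=
  Submodule.span_mono fun _ ⟨t, ht, htx⟩ => ⟨t, ht, hEF htx⟩

theorem le_extendToPrime (hQ : Q ≠ ⊤) : E ≤ extendToPrime Q E := fun x hx =>
  Submodule.subset_span ⟨1, Q.ne_top_iff_one.1 hQ, by simpa using hx⟩

variable [hQ : Q.IsPrime]

theorem mem_extendToPrime {x : K} : x ∈ extendToPrime Q E ↔ ∃ t ∉ Q, t • x ∈ E := by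
  simp only [Algebra.smul_def]
  refine ⟨fun hx => ?_, fun hx => Submodule.subset_span hx⟩
  induction hx using Submodule.span_induction with
  | mem _ hx => exact hx
  | zero => exact ⟨1, hQ.one_notMem, by simp⟩
  | add x y _ _ ihx ihy =>
    obtain ⟨t, ht, htx⟩ := ihx
    obtain ⟨u, hu, huy⟩ := ihy
    refine ⟨t * u, hQ.mul_notMem ht hu, ?_⟩
    convert add_mem (E.smul_mem u htx) (E.smul_mem t huy) using 1
    simp only [map_mul, Algebra.smul_def]
    ring
  | smul d x _ ih =>
    obtain ⟨t, ht, htx⟩ := ih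
    exact ⟨t, ht, by simpa only [mul_smul_comm] using E.smul_mem d htx⟩

theorem exists_smul_mem_of_fg_of_le_extendToPrime (hF : F.FG) (hFE : F ≤ extendToPrime Q E) :
    ∃ t ∉ Q, ∀ x ∈ F, t • x ∈ E := by
  induction F, hF using Submodule.fg_induction with
  | singleton x =>
    obtain ⟨t, ht, htx⟩ := mem_extendToPrime.1 (hFE (Submodule.mem_span_singleton_self x))
    refine ⟨t, ht, fun y hy => ?_⟩
    obtain ⟨d, rfl⟩ := Submodule.mem_span_singleton.1 hy
    exact smul_comm t d x ▸ E.smul_mem d htx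
  | sup F₁ F₂ _ _ ih₁ ih₂ =>
    obtain ⟨t, ht, htF₁⟩ := ih₁ (le_sup_left.trans hFE)
    obtain ⟨u, hu, huF₂⟩ := ih₂ (le_sup_right.trans hFE)
    refine ⟨t * u, hQ.mul_notMem ht hu, fun x hx => ?_⟩
    obtain ⟨x₁, hx₁, x₂, hx₂, rfl⟩ := Submodule.mem_sup.1 hx
    rw [smul_add, mul_comm t u, mul_smul, mul_comm u t, mul_smul]
    exact E.add_mem (E.smul_mem u (htF₁ x₁ hx₁)) (E.smul_mem t (huF₂ x₂ hx₂))

theorem extendToPrime_extendToPrime_le :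
    extendToPrime Q (extendToPrime Q E) ≤ extendToPrime Q E := fun x hx => by
  obtain ⟨t, ht, htx⟩ := mem_extendToPrime.1 hx
  obtain ⟨u, hu, hutx⟩ := mem_extendToPrime.1 htx
  exact mem_extendToPrime.2 ⟨u * t, hQ.mul_notMem hu ht, mul_smul u t x ▸ hutx⟩

theorem extendToPrime_le_extendToPrime_iff :
    extendToPrime Q E ≤ extendToPrime Q F ↔ E ≤ extendToPrime Q F :=
  ⟨(le_extendToPrime hQ.ne_top).trans,
    fun h => (extendToPrime_mono h).trans extendToPrime_extendToPrime_le⟩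

theorem extendToPrime_mul_le :
    extendToPrime Q E * extendToPrime Q F ≤ extendToPrime Q (E * F) :=
  Submodule.mul_le.2 fun x hx y hy => by
    obtain ⟨t, ht, htx⟩ := mem_extendToPrime.1 hx
    obtain ⟨u, hu, huy⟩ := mem_extendToPrime.1 hy
    exact mem_extendToPrime.2 ⟨t * u, hQ.mul_notMem ht hu,
      smul_mul_smul_comm t x u y ▸ Submodule.mul_mem_mul htx huy⟩

theorem extendToPrime_inf_le :
    extendToPrime Q E ⊓ extendToPrime Q F ≤ extendToPrime Q (E ⊓ F) := by
  rintro x ⟨hxE, hxF⟩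
  obtain ⟨t, ht, htx⟩ := mem_extendToPrime.1 hxE
  obtain ⟨u, hu, hux⟩ := mem_extendToPrime.1 hxF
  refine mem_extendToPrime.2 ⟨t * u, hQ.mul_notMem ht hu, ?_, ?_⟩
  · exact mul_comm t u ▸ mul_smul u t x ▸ E.smul_mem u htx
  · exact mul_smul t u x ▸ F.smul_mem t hux

theorem inv_mem_extendToPrime_one {x : K} (hx : x ∈ extendToPrime Q 1)
    (hxQ : x ∉ extendToPrime Q (idealExt K Q)) : x⁻¹ ∈ extendToPrime Q (1 : Submodule D K) := by
  obtain ⟨t, ht, htx⟩ := mem_extendToPrime.1 hx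
  obtain ⟨d, hd⟩ := Submodule.mem_one.1 htx
  have hdQ : d ∉ Q := fun hdQ => hxQ (mem_extendToPrime.2 ⟨t, ht, d, hdQ, hd⟩)
  have hx₀ : x ≠ 0 := fun hx₀ => hxQ (hx₀ ▸ zero_mem _)
  refine mem_extendToPrime.2 ⟨d, hdQ, Submodule.mem_one.2 ⟨t, ?_⟩⟩
  rw [Algebra.smul_def, hd, Algebra.smul_def, mul_inv_cancel_right₀ hx₀]

theorem one_notMem_extendToPrime_idealExt [FaithfulSMul D K] :
    1 ∉ extendToPrime Q (idealExt K Q) := fun hone => by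
  obtain ⟨t, ht, htQ⟩ := mem_extendToPrime.1 hone
  rw [← Algebra.algebraMap_eq_smul_one, algebraMap_mem_idealExt] at htQ
  exact ht htQ

theorem mem_or_inv_mem_of_one_mem_extendToPrime_mul [FaithfulSMul D K] {x : K}
    (hle : Submodule.span D {1, x} * E ≤ extendToPrime Q 1)
    (hone : 1 ∈ extendToPrime Q (Submodule.span D {1, x} * E)) :
    x ∈ extendToPrime Q (1 : Submodule D K) ∨ x⁻¹ ∈ extendToPrime Q 1 := by
  have hmul {a b : K} (ha : a ∈ extendToPrime Q (1 : Submodule D K)) (hb : b ∈ extendToPrime Q 1) :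
      a * b ∈ extendToPrime Q (1 : Submodule D K) := by
    simpa using extendToPrime_mul_le (Submodule.mul_mem_mul ha hb)
  have hE {z : K} (hz : z ∈ E) : z ∈ extendToPrime Q 1 := by
    simpa using hle (Submodule.mul_mem_mul (Submodule.subset_span (.inl rfl)) hz)
  have hxE {z : K} (hz : z ∈ E) : x * z ∈ extendToPrime Q 1 :=
    hle (Submodule.mul_mem_mul (Submodule.subset_span (.inr rfl)) hz)
  obtain ⟨z, hz, hzQ⟩ : ∃ z ∈ E,
      z ∉ extendToPrime Q (idealExt K Q) ∨ x * z ∉ extendToPrime Q (idealExt K Q) := by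
    by_contra! hall
    have hle : Submodule.span D {1, x} * E ≤ extendToPrime Q (idealExt K Q) := by
      rw [← Submodule.le_div_iff_mul_le, Submodule.span_le, Set.pair_subset_iff]
      simp only [SetLike.mem_coe, Submodule.mem_div_iff_forall_mul_mem, one_mul]
      exact ⟨fun z hz => (hall z hz).1, fun z hz => (hall z hz).2⟩
    exact one_notMem_extendToPrime_idealExt (extendToPrime_le_extendToPrime_iff.2 hle hone)
  rcases hzQ with hzQ | hzQ
  · have hz₀ : z ≠ 0 := fun hz₀ => hzQ (hz₀ ▸ zero_mem _)
    refine .inl ?_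
    simpa [hz₀] using hmul (hxE hz) (inv_mem_extendToPrime_one (hE hz) hzQ)
  · have hxz₀ : x * z ≠ 0 := fun hxz₀ => hzQ (hxz₀ ▸ zero_mem _)
    refine .inr ?_
    simpa [right_ne_zero_of_mul hxz₀] using hmul (hE hz) (inv_mem_extendToPrime_one (hxE hz) hzQ)

theorem mem_extendToPrime_span_singleton_of_div_mem {a b : K} (hb : b ≠ 0)
    (hab : a / b ∈ extendToPrime Q (1 : Submodule D K)) :
    a ∈ extendToPrime Q (Submodule.span D {b}) := by
  obtain ⟨t, ht, hta⟩ := mem_extendToPrime.1 hab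
  obtain ⟨d, hd⟩ := Submodule.mem_one.1 hta
  refine mem_extendToPrime.2 ⟨t, ht, Submodule.mem_span_singleton.2 ⟨d, ?_⟩⟩
  rw [Algebra.smul_def, hd, smul_mul_assoc, div_mul_cancel₀ a hb]

theorem exists_le_extendToPrime_span_singleton_of_fg
    (hval : ∀ x : K, x ∈ extendToPrime Q (1 : Submodule D K) ∨ x⁻¹ ∈ extendToPrime Q 1)
    (hF : F.FG) : ∃ a ∈ F, F ≤ extendToPrime Q (Submodule.span D {a}) := by
  have htotal (a b : K) : a ∈ extendToPrime Q (Submodule.span D {b}) ∨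
      b ∈ extendToPrime Q (Submodule.span D {a}) := by
    rcases eq_or_ne a 0 with rfl | ha
    · exact .inl (zero_mem _)
    rcases eq_or_ne b 0 with rfl | hb
    · exact .inr (zero_mem _)
    refine (hval (a / b)).imp (mem_extendToPrime_span_singleton_of_div_mem hb) fun hba => ?_
    exact mem_extendToPrime_span_singleton_of_div_mem ha (inv_div a b ▸ hba)
  have hspan {a b : K} (hab : a ∈ extendToPrime Q (Submodule.span D {b})) :
      extendToPrime Q (Submodule.span D {a}) ≤ extendToPrime Q (Submodule.span D {b}) :=
    extendToPrime_le_extendToPrime_iff.2 ((Submodule.span_singleton_le_iff_mem _ _).2 hab)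
  induction F, hF using Submodule.fg_induction with
  | singleton x => exact ⟨x, Submodule.mem_span_singleton_self x, le_extendToPrime hQ.ne_top⟩
  | sup F₁ F₂ _ _ ih₁ ih₂ =>
    obtain ⟨a, ha, hFa⟩ := ih₁
    obtain ⟨b, hb, hFb⟩ := ih₂
    rcases htotal a b with hab | hba
    · exact ⟨b, Submodule.mem_sup_right hb, sup_le (hFa.trans (hspan hab)) hFb⟩
    · exact ⟨a, Submodule.mem_sup_left ha, sup_le hFa (hFb.trans (hspan hba))⟩

theorem isInteger_atPrime_iff_mem_extendToPrime_one [Algebra (Localization.AtPrime Q) K]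
    [IsScalarTower D (Localization.AtPrime Q) K] {x : K} :
    IsLocalization.IsInteger (Localization.AtPrime Q) x ↔
      x ∈ extendToPrime Q (1 : Submodule D K) := by
  simp only [mem_extendToPrime, Submodule.mem_one, Algebra.smul_def,
    IsScalarTower.algebraMap_apply D (Localization.AtPrime Q) K]
  constructor
  · rintro ⟨z, rfl⟩
    obtain ⟨⟨d, t⟩, hz⟩ := IsLocalization.surj Q.primeCompl z
    exact ⟨t, t.2, d, by rw [← map_mul, mul_comm, hz]⟩
  · rintro ⟨t, ht, d, hd⟩
    have hunit : IsUnit (algebraMap D (Localization.AtPrime Q) t) :=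
      IsLocalization.map_units _ (⟨t, ht⟩ : Q.primeCompl)
    obtain ⟨z, hz⟩ := hunit.dvd (a := algebraMap D _ d)
    refine ⟨z, (hunit.map (algebraMap (Localization.AtPrime Q) K)).mul_left_cancel ?_⟩
    rw [← map_mul, ← hz, hd]

theorem isValuationDomain_atPrime_iff [IsDomain D] [IsFractionRing D K] :
    IsValuationDomain (Localization.AtPrime Q) ↔
      ∀ x : K, x ∈ extendToPrime Q (1 : Submodule D K) ∨ x⁻¹ ∈ extendToPrime Q 1 := by
  have hle := Q.primeCompl_le_nonZeroDivisors
  have hdom : IsDomain (Localization.AtPrime Q) := IsLocalization.isDomain_localization hle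
  let : Algebra (Localization.AtPrime Q) K :=
    IsLocalization.localizationAlgebraOfSubmonoidLe _ _ Q.primeCompl (nonZeroDivisors D) hle
  have : IsScalarTower D (Localization.AtPrime Q) K :=
    IsLocalization.localization_isScalarTower_of_submonoid_le _ _ _ _ hle
  have : IsFractionRing (Localization.AtPrime Q) K :=
    IsFractionRing.isFractionRing_of_isDomain_of_isLocalization Q.primeCompl _ _
  simp only [IsValuationDomain, exists_prop_of_true hdom,
    ValuationRing.iff_isInteger_or_isInteger _ K, isInteger_atPrime_iff_mem_extendToPrime_one]

end ExtendToPrime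

section StableOp

variable {D : Type*} [CommRing D] {K : Type*} [Field K] [Algebra D K]
variable {star : Submodule D K → Submodule D K} {E F : Submodule D K}

theorem mem_stableOp {x : K} : x ∈ stableOp star E ↔
    ∀ Q, QuasiStarMaximal (finTypeOp star) Q → x ∈ extendToPrime Q E := by
  simp only [stableOp, Submodule.mem_iInf]

theorem stableOp_le_extendToPrime {Q : Ideal D} (hQ : QuasiStarMaximal (finTypeOp star) Q) :
    stableOp star E ≤ extendToPrime Q E :=
  iInf₂_le Q hQ

theorem stableOp_mono (hEF : E ≤ F) : stableOp star E ≤ stableOp star F :=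
  iInf₂_mono fun _ _ => extendToPrime_mono hEF

theorem le_stableOp : E ≤ stableOp star E :=
  le_iInf₂ fun _ hQ => le_extendToPrime hQ.2.1

theorem exists_ne_zero_smul_mem [IsFractionRing D K] (hE : E ≠ ⊥) (x : K) :
    ∃ d : D, d ≠ 0 ∧ d • x ∈ E := by
  have := (algebraMap D K).domain_nontrivial
  obtain ⟨e, he, he₀⟩ := E.ne_bot_iff.1 hE
  obtain ⟨d, a, ha⟩ := IsLocalization.exists_integer_multiple (nonZeroDivisors D) (x / e)
  refine ⟨d, nonZeroDivisors.coe_ne_zero d, ?_⟩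
  rw [← div_mul_cancel₀ x he₀, ← smul_mul_assoc, ← ha, ← Algebra.smul_def]
  exact E.smul_mem a he

theorem stableOp_le_finTypeOp [IsFractionRing D K] (h : IsSemistarOperation star) (hE : E ≠ ⊥) :
    stableOp star E ≤ finTypeOp star E := fun x hx => by
  let H : Ideal D := E.comap (LinearMap.toSpanSingleton D K x)
  obtain ⟨d, hd₀, hd⟩ := exists_ne_zero_smul_mem hE x
  have hH : H ≠ ⊥ := (Submodule.ne_bot_iff H).2 ⟨d, hd, hd₀⟩
  have hone : 1 ∈ finTypeOp star (idealExt K H) := by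
    refine one_mem_finTypeOp_idealExt h hH fun Q hQ hHQ => ?_
    have := hQ.isPrime h.isSemistarOperation_finTypeOp
    obtain ⟨t, ht, htx⟩ := mem_extendToPrime.1 (stableOp_le_extendToPrime hQ hx)
    exact ht (hHQ htx)
  rw [← mul_one x]
  refine h.isSemistarOperation_finTypeOp.mul_mem (idealExt_ne_bot hH) ?_ hone
  rintro _ ⟨t, ht, rfl⟩
  rw [Algebra.linearMap_apply, mul_comm, ← Algebra.smul_def]
  exact ht

variable [FaithfulSMul D K]

theorem stableOp_le_stableOp_iff (h : IsSemistarOperation star) :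
    stableOp star E ≤ stableOp star F ↔ E ≤ stableOp star F := by
  refine ⟨le_stableOp.trans, fun hEF => le_iInf₂ fun Q hQ => ?_⟩
  have := hQ.isPrime h.isSemistarOperation_finTypeOp
  exact (stableOp_le_extendToPrime hQ).trans
    (extendToPrime_le_extendToPrime_iff.2 (hEF.trans (stableOp_le_extendToPrime hQ)))

theorem stableOp_mul_le (h : IsSemistarOperation star) :
    stableOp star E * stableOp star F ≤ stableOp star (E * F) := le_iInf₂ fun Q hQ => by
  have := hQ.isPrime h.isSemistarOperation_finTypeOp
  exact (mul_le_mul' (stableOp_le_extendToPrime hQ) (stableOp_le_extendToPrime hQ)).trans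
    extendToPrime_mul_le

theorem stableOp_stableOp_mul_stableOp (h : IsSemistarOperation star) (E F : Submodule D K) :
    stableOp star (stableOp star E * stableOp star F) = stableOp star (E * F) :=
  le_antisymm ((stableOp_le_stableOp_iff h).2 (stableOp_mul_le h))
    (stableOp_mono (mul_le_mul' le_stableOp le_stableOp))

theorem stableOp_inf_le (h : IsSemistarOperation star) :
    stableOp star E ⊓ stableOp star F ≤ stableOp star (E ⊓ F) := le_iInf₂ fun Q hQ => by
  have := hQ.isPrime h.isSemistarOperation_finTypeOp
  exact (inf_le_inf (stableOp_le_extendToPrime hQ) (stableOp_le_extendToPrime hQ)).trans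
    extendToPrime_inf_le

end StableOp

section Invertibility

variable {D : Type*} [CommRing D] {K : Type*} [Field K] [Algebra D K] [FaithfulSMul D K]
variable {star : Submodule D K → Submodule D K} {A E F : Submodule D K}

theorem quasiStarInvertible_stableOp_iff (h : IsSemistarOperation star) :
    QuasiStarInvertible (stableOp star) E ↔
      1 ∈ stableOp star (E * (stableOp star 1 / E)) := by
  have hle := (stableOp_le_stableOp_iff h).2 (submodule_mul_div_le E (stableOp star 1))
  rw [QuasiStarInvertible, ← Submodule.one_le, ← stableOp_le_stableOp_iff h]
  exact ⟨Eq.ge, hle.antisymm⟩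

theorem quasiStarInvertible_stableOp_of_one_mem (h : IsSemistarOperation star)
    (hone : 1 ∈ stableOp star (E * F)) (hEF : E * F ≤ stableOp star 1) :
    QuasiStarInvertible (stableOp star) E := by
  have hF : F ≤ stableOp star 1 / E := by rwa [Submodule.le_div_iff_mul_le, mul_comm]
  exact (quasiStarInvertible_stableOp_iff h).2 (stableOp_mono (mul_le_mul' le_rfl hF) hone)

theorem quasiStarInvertible_stableOp_of_mul_eq (h : IsSemistarOperation star)
    (hEF : stableOp star (E * F) = stableOp star 1) : QuasiStarInvertible (stableOp star) E :=
  quasiStarInvertible_stableOp_of_one_mem h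
    (hEF.ge (le_stableOp (Submodule.one_le.1 le_rfl))) (le_stableOp.trans_eq hEF)

theorem QuasiStarInvertible.of_mul_left (h : IsSemistarOperation star)
    (hAE : QuasiStarInvertible (stableOp star) (A * E)) :
    QuasiStarInvertible (stableOp star) E :=
  quasiStarInvertible_stableOp_of_mul_eq h (F := A * (stableOp star 1 / (A * E))) <| by
    rw [mul_left_comm, ← mul_assoc]
    exact hAE

theorem QuasiStarInvertible.of_le_stableOp (h : IsSemistarOperation star)
    (hE : QuasiStarInvertible (stableOp star) E) (hEF : E ≤ F) (hFE : F ≤ stableOp star E) :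
    QuasiStarInvertible (stableOp star) F := by
  refine quasiStarInvertible_stableOp_of_one_mem h (F := stableOp star 1 / E)
    (stableOp_mono (mul_le_mul' hEF le_rfl) ((quasiStarInvertible_stableOp_iff h).1 hE)) ?_
  calc F * (stableOp star 1 / E) ≤ stableOp star E * stableOp star (stableOp star 1 / E) :=
        mul_le_mul' hFE le_stableOp
    _ ≤ stableOp star (E * (stableOp star 1 / E)) := stableOp_mul_le h
    _ = stableOp star 1 := hE

end Invertibility

section PruferMultiplication

variable {D : Type*} [CommRing D] [IsDomain D] {K : Type*} [Field K] [Algebra D K]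
variable [IsFractionRing D K] {star : Submodule D K → Submodule D K} {E : Submodule D K}

theorem starPMD_iff_forall_mem_or_inv_mem (h : IsSemistarOperation star) :
    StarPMD star ↔ ∀ Q, QuasiStarMaximal (finTypeOp star) Q →
      ∀ x : K, x ∈ extendToPrime Q (1 : Submodule D K) ∨ x⁻¹ ∈ extendToPrime Q 1 := by
  refine ⟨fun hP Q hQ => ?_, fun hval Q _ hQ => isValuationDomain_atPrime_iff.2 (hval Q hQ)⟩
  have := hQ.isPrime h.isSemistarOperation_finTypeOp
  exact isValuationDomain_atPrime_iff.1 (hP Q hQ)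

theorem StarPMD.quasiStarInvertible_of_fg (h : IsSemistarOperation star) (hP : StarPMD star)
    (hE : E ≠ ⊥) (hfg : E.FG) : QuasiStarInvertible (stableOp star) E := by
  refine (quasiStarInvertible_stableOp_iff h).2 (mem_stableOp.2 fun Q hQ => ?_)
  have := hQ.isPrime h.isSemistarOperation_finTypeOp
  obtain ⟨a, haE, hEa⟩ := exists_le_extendToPrime_span_singleton_of_fg
    ((starPMD_iff_forall_mem_or_inv_mem h).1 hP Q hQ) hfg
  obtain ⟨t, ht, htE⟩ := exists_smul_mem_of_fg_of_le_extendToPrime hfg hEa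
  have ha : a ≠ 0 := by
    rintro rfl
    refine hE (eq_bot_iff.2 fun x hx => ?_)
    have htx := htE x hx
    have ht₀ : t ≠ 0 := fun ht₀ => ht (ht₀ ▸ Q.zero_mem)
    simpa [ht₀, Algebra.smul_def] using htx
  have hZ : t • a⁻¹ ∈ stableOp star 1 / E := by
    refine Submodule.mem_div_iff_forall_mul_mem.2 fun x hx => le_stableOp ?_
    obtain ⟨d, hd⟩ := Submodule.mem_span_singleton.1 (htE x hx)
    refine Submodule.mem_one.2 ⟨d, ?_⟩
    rw [smul_mul_assoc, mul_comm, ← smul_mul_assoc, ← hd, smul_mul_assoc, mul_inv_cancel₀ ha,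
      Algebra.algebraMap_eq_smul_one]
  refine mem_extendToPrime.2 ⟨t, ht, ?_⟩
  rw [← mul_inv_cancel₀ ha, ← mul_smul_comm]
  exact Submodule.mul_mem_mul haE hZ

theorem starPMD_iff_forall_fg_quasiStarInvertible (h : IsSemistarOperation star) :
    StarPMD star ↔
      ∀ E : Submodule D K, E ≠ ⊥ → E.FG → QuasiStarInvertible (stableOp star) E := by
  refine ⟨fun hP _ => hP.quasiStarInvertible_of_fg h, fun hinv => ?_⟩
  refine (starPMD_iff_forall_mem_or_inv_mem h).2 fun Q hQ x => ?_
  have := hQ.isPrime h.isSemistarOperation_finTypeOp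
  have hone : (1 : K) ∈ Submodule.span D {1, x} := Submodule.subset_span (by simp)
  have hspan := hinv _ ((Submodule.ne_bot_iff _).2 ⟨1, hone, one_ne_zero⟩)
    (Submodule.fg_span (by simp))
  exact mem_or_inv_mem_of_one_mem_extendToPrime_mul
    ((submodule_mul_div_le _ _).trans (stableOp_le_extendToPrime hQ))
    (stableOp_le_extendToPrime hQ ((quasiStarInvertible_stableOp_iff h).1 hspan))

end PruferMultiplication

section Dedekind

variable {D : Type*} [CommRing D] {K : Type*} [Field K] [Algebra D K]
variable {star : Submodule D K → Submodule D K} {E : Submodule D K}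

theorem exists_ne_zero_forall_smul_mem_one (hE : IsFractional (nonZeroDivisors D) E) :
    ∃ d : D, d ≠ 0 ∧ ∀ x ∈ E, d • x ∈ (1 : Submodule D K) := by
  have := (algebraMap D K).domain_nontrivial
  obtain ⟨d, hd, hdE⟩ := hE
  exact ⟨d, nonZeroDivisors.ne_zero hd, fun x hx => Submodule.mem_one.2 (hdE x hx)⟩

theorem algebraMap_mem_stableOp_one_div {d : D} (hd : ∀ x ∈ E, d • x ∈ (1 : Submodule D K)) :
    algebraMap D K d ∈ stableOp star 1 / E :=
  Submodule.mem_div_iff_forall_mul_mem.2 fun x hx => le_stableOp (Algebra.smul_def d x ▸ hd x hx)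

variable [IsFractionRing D K]

theorem StarPMD.finTypeOp_one_le_stableOp_one [IsDomain D] (h : IsSemistarOperation star)
    (hP : StarPMD star) : finTypeOp star 1 ≤ stableOp star 1 := fun y hy =>
  mem_stableOp.2 fun Q hQ => by
    have hfin := h.isSemistarOperation_finTypeOp
    have := hQ.isPrime hfin
    rcases eq_or_ne y 0 with rfl | hy₀
    · exact zero_mem _
    refine ((starPMD_iff_forall_mem_or_inv_mem h).1 hP Q hQ y).elim id fun hyinv => ?_
    rw [← inv_inv y]
    refine inv_mem_extendToPrime_one hyinv fun hyinvQ => ?_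
    obtain ⟨t, ht, q, hq, hqt⟩ := mem_extendToPrime.1 hyinvQ
    have hqy : algebraMap D K q * y ∈ finTypeOp star (idealExt K Q) := by
      refine hfin.mul_mem (E := 1) one_ne_zero (fun e he => ?_) hy
      obtain ⟨d, rfl⟩ := Submodule.mem_one.1 he
      rw [← map_mul]
      exact algebraMap_mem_idealExt.2 (Q.mul_mem_right d hq)
    have hty : algebraMap D K q * y = algebraMap D K t := by
      rw [← Algebra.linearMap_apply (R := D) (A := K), hqt, smul_mul_assoc, inv_mul_cancel₀ hy₀,
        Algebra.algebraMap_eq_smul_one]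
    rw [hty] at hqy
    exact ht (hQ.1.2.le hqy)

theorem QuasiStarInvertible.finTypeOp_le_stableOp (h : IsSemistarOperation star)
    (hone : finTypeOp star 1 ≤ stableOp star 1) (hE : E ≠ ⊥)
    (hinv : QuasiStarInvertible (stableOp star) E) : finTypeOp star E ≤ stableOp star E := by
  have hfin := h.isSemistarOperation_finTypeOp
  have hst : (stableOp star 1 : Submodule D K) ≠ ⊥ := ne_bot_of_le_ne_bot one_ne_zero le_stableOp
  have hZ : finTypeOp star E * (stableOp star 1 / E) ≤ stableOp star 1 := by
    refine Submodule.mul_le.2 fun x hx z hz => hone ?_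
    refine hfin.star_le_star_of_le_star hst one_ne_zero (stableOp_le_finTypeOp h one_ne_zero) ?_
    exact mul_comm x z ▸ hfin.mul_mem hE (Submodule.mem_div_iff_forall_mul_mem.1 hz) hx
  calc finTypeOp star E = finTypeOp star E * 1 := (mul_one _).symm
    _ ≤ stableOp star (finTypeOp star E) * stableOp star (E * (stableOp star 1 / E)) :=
      mul_le_mul' le_stableOp (Submodule.one_le.2 ((quasiStarInvertible_stableOp_iff h).1 hinv))
    _ ≤ stableOp star (finTypeOp star E * (E * (stableOp star 1 / E))) := stableOp_mul_le h
    _ = stableOp star (E * (finTypeOp star E * (stableOp star 1 / E))) := by rw [mul_left_comm]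
    _ ≤ stableOp star (stableOp star E * stableOp star 1) :=
      stableOp_mono (mul_le_mul' le_stableOp hZ)
    _ = stableOp star E := by rw [stableOp_stableOp_mul_stableOp h, mul_one]

theorem StarPMD.finTypeOp_eq_stableOp [IsDomain D] (h : IsSemistarOperation star)
    (hP : StarPMD star) (hE : E ≠ ⊥) : finTypeOp star E = stableOp star E := by
  refine le_antisymm (fun x hx => ?_) (stableOp_le_finTypeOp h hE)
  obtain ⟨F, ⟨hF₀, hF, hFE⟩, hxF⟩ := (h.mem_finTypeOp hE).1 hx
  exact stableOp_mono hFE <| (hP.quasiStarInvertible_of_fg h hF₀ hF).finTypeOp_le_stableOp h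
    (hP.finTypeOp_one_le_stableOp_one h) hF₀ (star_le_finTypeOp_of_fg hF₀ hF hxF)

theorem StarPMD.quasiStarInvertible_idealExt [IsDomain D] (h : IsSemistarOperation star)
    (hP : StarPMD star) (hN : StarNoetherian star) {I : Ideal D} (hI : I ≠ ⊥) :
    QuasiStarInvertible (stableOp star) (idealExt K I) := by
  obtain ⟨F, hFI, hF₀, hF, hIF⟩ := (starNoetherian_iff_forall_exists_fg_le h).1 hN I hI
  exact (hP.quasiStarInvertible_of_fg h hF₀ hF).of_le_stableOp h hFI
    ((hIF.trans (star_le_finTypeOp_of_fg hF₀ hF)).trans_eq (hP.finTypeOp_eq_stableOp h hF₀))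

theorem QuasiStarInvertible.exists_fg_le (h : IsSemistarOperation star) (hE : E ≠ ⊥)
    (hfr : IsFractional (nonZeroDivisors D) E) (hinv : QuasiStarInvertible (stableOp star) E) :
    ∃ F ≤ E, F ≠ ⊥ ∧ F.FG ∧ E ≤ star F := by
  obtain ⟨d, hd₀, hd⟩ := exists_ne_zero_forall_smul_mem_one hfr
  have hEZ : E * (stableOp star 1 / E) ≠ ⊥ :=
    mul_ne_zero hE <| (Submodule.ne_bot_iff _).2
      ⟨algebraMap D K d, algebraMap_mem_stableOp_one_div hd, by simpa using hd₀⟩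
  obtain ⟨G, ⟨hG₀, hG, hGEZ⟩, hone⟩ := (h.mem_finTypeOp hEZ).1
    (stableOp_le_finTypeOp h hEZ ((quasiStarInvertible_stableOp_iff h).1 hinv))
  obtain ⟨F, hFE, hF, hGF⟩ := exists_fg_le_mul_of_fg_of_le_mul hG hGEZ
  have hF₀ : F ≠ ⊥ := by
    rintro rfl
    exact hG₀ (le_bot_iff.1 (hGF.trans_eq (Submodule.bot_mul _)))
  have hEG : E * G ≤ stableOp star F :=
    calc E * G ≤ E * (F * (stableOp star 1 / E)) := mul_le_mul' le_rfl hGF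
      _ = F * (E * (stableOp star 1 / E)) := mul_left_comm _ _ _
      _ ≤ stableOp star F * stableOp star 1 :=
        mul_le_mul' le_stableOp (submodule_mul_div_le _ _)
      _ ≤ stableOp star F := (stableOp_mul_le h).trans_eq (by rw [mul_one])
  have hst : stableOp star F ≤ star F := (stableOp_le_finTypeOp h hF₀).trans (h.finTypeOp_le hF₀)
  refine ⟨F, hFE, hF₀, hF, fun x hx => ?_⟩
  refine h.star_le_star_of_le_star (ne_bot_of_le_ne_bot hF₀ le_stableOp) hF₀ hst ?_
  exact mul_one x ▸ h.mul_mem hG₀ (fun y hy => hEG (Submodule.mul_mem_mul hx hy)) hone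

theorem quasiStarInvertible_of_forall_idealExt (h : IsSemistarOperation star)
    (hinv : ∀ I : Ideal D, I ≠ ⊥ → QuasiStarInvertible (stableOp star) (idealExt K I))
    (hE : E ≠ ⊥) (hfr : IsFractional (nonZeroDivisors D) E) :
    QuasiStarInvertible (stableOp star) E := by
  obtain ⟨d, hd₀, hd⟩ := exists_ne_zero_forall_smul_mem_one hfr
  let A := Submodule.span D {algebraMap D K d}
  have hA : A ≠ ⊥ := by simpa [A] using hd₀
  have hAE : A * E ≤ 1 := by
    rw [← Submodule.le_div_iff_mul_le, Submodule.span_singleton_le_iff_mem,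
      Submodule.mem_div_iff_forall_mul_mem]
    simpa only [← Algebra.smul_def] using hd
  have hI := idealExt_comap hAE
  refine QuasiStarInvertible.of_mul_left h (A := A) (hI ▸ hinv _ ?_)
  rintro hbot
  rw [hbot, idealExt, Submodule.map_bot] at hI
  exact mul_ne_zero hA hE hI.symm

theorem div_le_stableOp_span_singleton_inv (h : IsSemistarOperation star) {x : K} (hx : x ∈ E)
    (hx₀ : x ≠ 0) : stableOp star 1 / E ≤ stableOp star (Submodule.span D {x⁻¹}) := fun z hz => by
  rw [← mul_inv_cancel_right₀ hx₀ z, ← one_mul (Submodule.span D {x⁻¹})]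
  exact stableOp_mul_le h (Submodule.mul_mem_mul (Submodule.mem_div_iff_forall_mul_mem.1 hz x hx)
    (le_stableOp (Submodule.mem_span_singleton_self x⁻¹)))

-- `(D^⋆̃ : E)` need not be fractional; its intersection with `x⁻¹D`, for `0 ≠ x ∈ E`, is, and has
-- the same `⋆̃`-closure because `⋆̃` is stable.
theorem QuasiStarInvertible.exists_isFractional_mul_eq (h : IsSemistarOperation star) (hE : E ≠ ⊥)
    (hfr : IsFractional (nonZeroDivisors D) E) (hinv : QuasiStarInvertible (stableOp star) E) :
    ∃ G : Submodule D K, G ≠ ⊥ ∧ IsFractional (nonZeroDivisors D) G ∧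
      stableOp star (E * G) = stableOp star 1 := by
  obtain ⟨x, hx, hx₀⟩ := E.ne_bot_iff.1 hE
  obtain ⟨d, hd₀, hd⟩ := exists_ne_zero_forall_smul_mem_one hfr
  set Z := stableOp star 1 / E
  let B : FractionalIdeal (nonZeroDivisors D) K := .spanSingleton _ x⁻¹
  have hZB : Z ≤ stableOp star B := by
    simpa [B] using div_le_stableOp_span_singleton_inv h hx hx₀
  refine ⟨Z ⊓ B, ?_, FractionalIdeal.isFractional_of_le (J := B) inf_le_right, ?_⟩
  · obtain ⟨a, ha⟩ := Submodule.mem_one.1 (hd x hx)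
    refine (Submodule.ne_bot_iff _).2
      ⟨algebraMap D K d, ⟨algebraMap_mem_stableOp_one_div hd, ?_⟩, by simpa using hd₀⟩
    refine (FractionalIdeal.mem_spanSingleton _).2 ⟨a, ?_⟩
    rw [Algebra.smul_def, ha, Algebra.smul_def, mul_inv_cancel_right₀ hx₀]
  · have hZ : Z ≤ stableOp star (Z ⊓ B) := (le_inf le_stableOp hZB).trans (stableOp_inf_le h)
    refine le_antisymm ((stableOp_mono (mul_le_mul' le_rfl inf_le_left)).trans_eq hinv) ?_
    rw [← hinv, stableOp_le_stableOp_iff h]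
    exact (mul_le_mul' le_stableOp hZ).trans (stableOp_mul_le h)

theorem starNoetherian_and_starPMD_iff_forall_idealExt [IsDomain D] (h : IsSemistarOperation star) :
    StarNoetherian star ∧ StarPMD star ↔
      ∀ I : Ideal D, I ≠ ⊥ → QuasiStarInvertible (stableOp star) (idealExt K I) := by
  refine ⟨fun ⟨hN, hP⟩ I => hP.quasiStarInvertible_idealExt h hN, fun hinv => ⟨?_, ?_⟩⟩
  · exact (starNoetherian_iff_forall_exists_fg_le h).2 fun I hI =>
      (hinv I hI).exists_fg_le h (idealExt_ne_bot hI) (isFractional_idealExt I)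
  · exact (starPMD_iff_forall_fg_quasiStarInvertible h).2 fun E hE hfg =>
      quasiStarInvertible_of_forall_idealExt h hinv hE (FractionalIdeal.isFractional_of_fg hfg)

theorem forall_isFractional_quasiStarInvertible_iff_forall_idealExt
    (h : IsSemistarOperation star) :
    (∀ E : Submodule D K, E ≠ ⊥ → IsFractional (nonZeroDivisors D) E →
      QuasiStarInvertible (stableOp star) E) ↔
      ∀ I : Ideal D, I ≠ ⊥ → QuasiStarInvertible (stableOp star) (idealExt K I) :=
  ⟨fun hinv I hI => hinv _ (idealExt_ne_bot hI) (isFractional_idealExt I),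
    fun hinv _ => quasiStarInvertible_of_forall_idealExt h hinv⟩

end Dedekind

section Statement

variable {D : Type*} [CommRing D] [IsDomain D]
variable {K : Type*} [Field K] [Algebra D K] [IsFractionRing D K]

/-- `D` an integral domain, `⋆` a semistar operation. TFAE:
(1) `D` is ⋆-Noetherian and a P⋆MD (a ⋆-Dedekind domain);
(2) `{ F^⋆̃ : F nonzero fractional ideal }` is a group under `F^⋆̃ × G^⋆̃ := (FG)^⋆̃`
    (with identity `D^⋆̃`);
(3) every nonzero fractional ideal of `D` is quasi-⋆̃-invertible;
(4) every nonzero integral ideal of `D` is quasi-⋆̃-invertible. -/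
theorem starDedekind_iff_group_iff_quasiInvertible
    (star : Submodule D K → Submodule D K) (hstar : IsSemistarOperation star) :
    ((StarNoetherian star ∧ StarPMD star) ↔
      ((∀ F G : Submodule D K, F ≠ ⊥ → G ≠ ⊥ →
          IsFractional (nonZeroDivisors D) F → IsFractional (nonZeroDivisors D) G →
          stableOp star (stableOp star F * stableOp star G) = stableOp star (F * G)) ∧
       (∀ F : Submodule D K, F ≠ ⊥ → IsFractional (nonZeroDivisors D) F →
          stableOp star (F * (1 : Submodule D K)) = stableOp star F) ∧
       (∀ F : Submodule D K, F ≠ ⊥ → IsFractional (nonZeroDivisors D) F →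
          ∃ G : Submodule D K, G ≠ ⊥ ∧ IsFractional (nonZeroDivisors D) G ∧
            stableOp star (F * G) = stableOp star (1 : Submodule D K)))) ∧
    ((StarNoetherian star ∧ StarPMD star) ↔
      ∀ E : Submodule D K, E ≠ ⊥ → IsFractional (nonZeroDivisors D) E →
        QuasiStarInvertible (stableOp star) E) ∧
    ((StarNoetherian star ∧ StarPMD star) ↔
      ∀ I : Ideal D, I ≠ ⊥ → QuasiStarInvertible (stableOp star) (idealExt K I)) := by
  have h14 := starNoetherian_and_starPMD_iff_forall_idealExt hstar
  have h13 := h14.trans (forall_isFractional_quasiStarInvertible_iff_forall_idealExt hstar).symm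
  refine ⟨h13.trans ⟨fun hinv => ⟨?_, ?_, ?_⟩, ?_⟩, h13, h14⟩
  · exact fun F G _ _ _ _ => stableOp_stableOp_mul_stableOp hstar F G
  · exact fun F _ _ => by rw [mul_one]
  · exact fun F hF hfr => (hinv F hF hfr).exists_isFractional_mul_eq hstar hF hfr
  · rintro ⟨-, -, hgroup⟩ E hE hfr
    obtain ⟨G, -, -, hEG⟩ := hgroup E hE hfr
    exact quasiStarInvertible_stableOp_of_mul_eq hstar hEG

end Statement
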